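/- Let X ∈ ℕ and let J ⊆ ℝ be an open interval with f_α(X) ∈ J. Then there exists an index m ∈ ℕ with [q_n](X) = 0 for all n > m, such that every Y ∈ ℕ with [q_n](Y) = [q_n](X) for all n ≤ m satisfies f_α(Y) ∈ J. -/

import Mathlib

/-!
The errors `βₙ = qₙ α - pₙ` satisfy `βₙ = -θₙ₊₂ βₙ₊₁`, where the complete quotients `θₙ₊₂` are
positive. So consecutive errors have opposite signs and the recurrence `βₙ₊₂ = aₙ₊₂ βₙ₊₁ + βₙ`
becomes `aₙ₊₂ |βₙ₊₁| = |βₙ| - |βₙ₊₂|`. Telescoping, `∑ aₙ₊₁ |βₙ|` converges. If the digits of `Y`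
continue those of `X` after position `m`, then modulo `1` the number `α Y - α X` is
`∑_{n > m} dₙ βₙ` with `dₙ ≤ aₙ₊₁`, bounded in absolute value by a tail of that series.

On the other hand `f_α X` is the reduction of `α X` modulo `1` to `[-{α}, 1 - {α})`, and this
reduction is continuous at `α X`: it could only jump if `α X ≡ -α` modulo `1`, that is, if
`α (X + 1)` were an integer.
-/

/-- `a` is the sequence of partial quotients of the continued fraction expansion
`[a 0; a 1, a 2, …]` of `α`: there is a sequence `θ` of complete quotients with
`θ 0 = α`, `a n = ⌊θ n⌋` and `θ (n+1) = 1/(θ n - ⌊θ n⌋)`. -/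
def IsCFExpansion (α : ℝ) (a : ℕ → ℕ) : Prop :=
  ∃ θ : ℕ → ℝ, θ 0 = α ∧
    ∀ n : ℕ, (a n : ℤ) = ⌊θ n⌋ ∧ θ (n + 1) = 1 / (θ n - (⌊θ n⌋ : ℝ))

/-- `p n / q n` are the convergents of the continued fraction with partial quotients `a`:
`p₋₁ = 1, q₋₁ = 0, p₀ = a₀, q₀ = 1`, and
`pₙ = aₙ pₙ₋₁ + pₙ₋₂`, `qₙ = aₙ qₙ₋₁ + qₙ₋₂` for `n ≥ 1`. -/
def IsConvergents (a p q : ℕ → ℕ) : Prop :=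
  p 0 = a 0 ∧ q 0 = 1 ∧ p 1 = a 1 * a 0 + 1 ∧ q 1 = a 1 ∧
  (∀ n : ℕ, p (n + 2) = a (n + 2) * p (n + 1) + p n) ∧
  (∀ n : ℕ, q (n + 2) = a (n + 2) * q (n + 1) + q n)

/-- `d` is the sequence of Ostrowski digits of `X` in base the continued fraction
with partial quotients `a` and convergent denominators `q`: `d n` is the digit
`b_{n+1}` multiplying `q n`, the digits are eventually zero,
`X = Σ_{n} d n * q n`, `d 0 < a 1`, `d n ≤ a (n+1)` for `n ≥ 1`, and
`d n = 0` whenever `d (n+1) = a (n+2)`. -/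
def IsOstrowskiRep (a q : ℕ → ℕ) (X : ℕ) (d : ℕ → ℕ) : Prop :=
  d 0 < a 1 ∧ (∀ n : ℕ, d (n + 1) ≤ a (n + 2)) ∧
  (∀ n : ℕ, d (n + 1) = a (n + 2) → d n = 0) ∧
  ∃ N : ℕ, (∀ n : ℕ, N ≤ n → d n = 0) ∧ X = ∑ n ∈ Finset.range N, d n * q n

/-- The half-open interval `I_α = [−1/ζ_α, 1 − 1/ζ_α)` where `ζ_α = 1/(α − ⌊α⌋)`. -/
def Ialpha (α : ℝ) : Set ℝ :=
  Set.Ico (-(1 / (1 / (α - (⌊α⌋ : ℝ))))) (1 - 1 / (1 / (α - (⌊α⌋ : ℝ))))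

/-- `f` is the function `f_α : ℕ → I_α` with `f_α X` the unique element of `I_α`
such that `α X − f_α X` is a (natural) integer. -/
def IsFracPart (α : ℝ) (f : ℕ → ℝ) : Prop :=
  ∀ X : ℕ, f X ∈ Ialpha α ∧ ∃ U : ℕ, α * (X : ℝ) - f X = (U : ℝ)

open Filter Topology

/-- The error `βₙ = qₙ α - pₙ` with which the fraction `pₙ / qₙ` approximates `α`, scaled by its
denominator. -/
def convergentError (α : ℝ) (p q : ℕ → ℕ) (n : ℕ) : ℝ :=
  q n * α - p n

/-- `d` is a finitely supported sequence of digits expanding `X` in the scale `q`. Unlike for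
`IsOstrowskiRep`, the digits are not restricted, so `X` may have many expansions. -/
def IsDigitExpansion (q : ℕ → ℕ) (X : ℕ) (d : ℕ → ℕ) : Prop :=
  ∃ N : ℕ, (∀ n : ℕ, N ≤ n → d n = 0) ∧ X = ∑ n ∈ Finset.range N, d n * q n

section Convergents

variable {α : ℝ} {a p q : ℕ → ℕ}

lemma IsCFExpansion.exists_completeQuotients (ha : IsCFExpansion α a) (hirr : Irrational α) :
    ∃ θ : ℕ → ℝ, θ 0 = α ∧ ∀ n, 0 < θ (n + 1) ∧ (θ n - a n) * θ (n + 1) = 1 := by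
  obtain ⟨θ, h0, hθ⟩ := ha
  have irrational_θ (n : ℕ) : Irrational (θ n) := by
    induction n with
    | zero => rwa [h0]
    | succ n ih =>
      rw [(hθ n).2, one_div]
      exact (ih.sub_intCast _).inv
  refine ⟨θ, h0, fun n => ?_⟩
  have ha_floor : (a n : ℝ) = ⌊θ n⌋ := mod_cast (hθ n).1
  have hne : θ n - ⌊θ n⌋ ≠ 0 := ((irrational_θ n).sub_intCast _).ne_zero
  have hpos : 0 < θ n - ⌊θ n⌋ := (sub_nonneg.2 (Int.floor_le _)).lt_of_ne' hne
  rw [ha_floor, (hθ n).2]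
  exact ⟨one_div_pos.2 hpos, mul_one_div_cancel hne⟩

lemma IsConvergents.convergentError_add_two (hpq : IsConvergents a p q) (n : ℕ) :
    convergentError α p q (n + 2)
      = a (n + 2) * convergentError α p q (n + 1) + convergentError α p q n := by
  obtain ⟨-, -, -, -, hp, hq⟩ := hpq
  simp only [convergentError, hp, hq]
  push_cast
  ring

lemma IsConvergents.convergentError_eq_neg_mul {θ : ℕ → ℝ} (hpq : IsConvergents a p q)
    (hθ : ∀ n, (θ n - a n) * θ (n + 1) = 1) (n : ℕ) :
    convergentError (θ 0) p q n = -θ (n + 2) * convergentError (θ 0) p q (n + 1) := by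
  induction n with
  | zero =>
    obtain ⟨hp0, hq0, hp1, hq1, -, -⟩ := hpq
    simp only [convergentError, zero_add, hp0, hq0, hp1, hq1]
    push_cast
    linear_combination θ 2 * hθ 0 - (θ 0 - a 0) * hθ 1
  | succ n ih =>
    rw [hpq.convergentError_add_two]
    linear_combination θ (n + 3) * ih - convergentError (θ 0) p q (n + 1) * hθ (n + 2)

lemma IsConvergents.mul_abs_convergentError (hpq : IsConvergents a p q) (ha : IsCFExpansion α a)
    (hirr : Irrational α) (n : ℕ) :
    a (n + 2) * |convergentError α p q (n + 1)|
      = |convergentError α p q n| - |convergentError α p q (n + 2)| := by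
  obtain ⟨θ, rfl, hθ⟩ := ha.exists_completeQuotients hirr
  have abs_eq (k : ℕ) : |convergentError (θ 0) p q k|
      = θ (k + 2) * |convergentError (θ 0) p q (k + 1)| := by
    rw [hpq.convergentError_eq_neg_mul (fun i => (hθ i).2) k, abs_mul, abs_neg,
      abs_of_pos (hθ (k + 1)).1]
  linear_combination -abs_eq n - (θ (n + 2) - a (n + 2)) * abs_eq (n + 1)
    - |convergentError (θ 0) p q (n + 2)| * (hθ (n + 2)).2

lemma IsConvergents.summable_mul_abs_convergentError (hpq : IsConvergents a p q)
    (ha : IsCFExpansion α a) (hirr : Irrational α) :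
    Summable fun n => a (n + 1) * |convergentError α p q n| := by
  set β := convergentError α p q
  rw [← summable_nat_add_iff 1]
  refine summable_of_sum_range_le (c := |β 0| + |β 1|) (fun n => by positivity) fun N => ?_
  calc ∑ n ∈ Finset.range N, a (n + 2) * |β (n + 1)|
      = ∑ n ∈ Finset.range N, ((|β n| + |β (n + 1)|) - (|β (n + 1)| + |β (n + 2)|)) :=
        Finset.sum_congr rfl fun n _ => by
          rw [hpq.mul_abs_convergentError ha hirr]
          ring
    _ = |β 0| + |β 1| - (|β N| + |β (N + 1)|) :=
        Finset.sum_range_sub' (fun n => |β n| + |β (n + 1)|) N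
    _ ≤ |β 0| + |β 1| := sub_le_self _ (by positivity)

lemma IsConvergents.eventually_abs_sum_mul_convergentError_lt (hpq : IsConvergents a p q)
    (ha : IsCFExpansion α a) (hirr : Irrational α) {ε : ℝ} (hε : 0 < ε) :
    ∀ᶠ M in atTop, ∀ c : ℕ → ℝ, (∀ n, |c n| ≤ a (n + 1)) → ∀ N,
      |∑ n ∈ Finset.Ico M N, c n * convergentError α p q n| < ε := by
  obtain ⟨s, hs⟩ :=
    summable_iff_vanishing_norm.1 (hpq.summable_mul_abs_convergentError ha hirr) ε hε
  filter_upwards [tendsto_finset_range.eventually_ge_atTop s] with M hM c hc N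
  have hdisj : Disjoint (Finset.Ico M N) s :=
    (Finset.range_eq_Ico M ▸ Finset.Ico_disjoint_Ico_consecutive 0 M N).symm.mono_right hM
  calc |∑ n ∈ Finset.Ico M N, c n * convergentError α p q n|
      ≤ ∑ n ∈ Finset.Ico M N, |c n * convergentError α p q n| := Finset.abs_sum_le_sum_abs _ _
    _ ≤ ∑ n ∈ Finset.Ico M N, a (n + 1) * |convergentError α p q n| := by
        simp only [abs_mul]
        gcongr
        exact hc _
    _ < ε := (le_abs_self _).trans_lt (hs _ hdisj)

lemma mul_sum_mul_eq_sum_mul_convergentError_add (α : ℝ) (p q c : ℕ → ℕ) (s : Finset ℕ) :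
    α * ((∑ n ∈ s, c n * q n : ℕ) : ℝ)
      = ∑ n ∈ s, c n * convergentError α p q n + ((∑ n ∈ s, c n * p n : ℕ) : ℝ) := by
  push_cast
  rw [Finset.mul_sum, ← Finset.sum_add_distrib]
  refine Finset.sum_congr rfl fun n _ => ?_
  rw [convergentError]
  ring

end Convergents

section Digits

variable {a q d e : ℕ → ℕ} {X Y : ℕ}

lemma IsDigitExpansion.eventually_eq_sum_range (hd : IsDigitExpansion q X d) :
    ∀ᶠ M in atTop, (∀ n, M ≤ n → d n = 0) ∧ X = ∑ n ∈ Finset.range M, d n * q n := by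
  obtain ⟨N, hzero, hsum⟩ := hd
  filter_upwards [eventually_ge_atTop N] with M hM
  refine ⟨fun n hn => hzero n (hM.trans hn), hsum.trans (Eq.symm ?_)⟩
  exact Finset.eventually_constant_sum (fun n hn => by rw [hzero n hn, zero_mul]) hM

lemma IsDigitExpansion.exists_eq_add_sum_Ico (he : IsDigitExpansion q Y e) {M : ℕ}
    (hX : X = ∑ n ∈ Finset.range M, d n * q n) (hagree : ∀ n < M, e n = d n) :
    ∃ N, Y = X + ∑ n ∈ Finset.Ico M N, e n * q n := by
  obtain ⟨N, ⟨-, hY⟩, hMN⟩ := (he.eventually_eq_sum_range.and (eventually_ge_atTop M)).exists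
  have hprefix : X = ∑ n ∈ Finset.range M, e n * q n :=
    hX.trans (Finset.sum_congr rfl fun n hn => by rw [hagree n (Finset.mem_range.1 hn)])
  exact ⟨N, by rw [hprefix, Finset.sum_range_add_sum_Ico _ hMN, hY]⟩

lemma IsOstrowskiRep.digit_le (hd : IsOstrowskiRep a q X d) : ∀ n, d n ≤ a (n + 1)
  | 0 => hd.1.le
  | n + 1 => hd.2.1 n

lemma IsOstrowskiRep.isDigitExpansion (hd : IsOstrowskiRep a q X d) : IsDigitExpansion q X d :=
  hd.2.2.2

end Digits

section FracPart

variable {α : ℝ}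

lemma Ialpha_eq_Ico (α : ℝ) : Ialpha α = Set.Ico (-Int.fract α) (-Int.fract α + 1) := by
  rw [Ialpha, one_div_one_div, Int.self_sub_floor, sub_eq_neg_add]

lemma IsFracPart.eq_toIcoMod {f : ℕ → ℝ} (hf : IsFracPart α f) (X : ℕ) :
    f X = toIcoMod one_pos (-Int.fract α) (α * X) := by
  obtain ⟨hmem, U, hU⟩ := hf X
  refine ((toIcoMod_eq_iff one_pos).2 ⟨Ialpha_eq_Ico α ▸ hmem, U, ?_⟩).symm
  rw [zsmul_one, Int.cast_natCast, ← hU, add_sub_cancel]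

lemma continuousAt_toIcoMod_neg_fract (hirr : Irrational α) (X : ℕ) :
    ContinuousAt (toIcoMod one_pos (-Int.fract α)) (α * X) := by
  refine continuousAt_toIcoMod _ _ fun hmod => ?_
  obtain ⟨z, hz⟩ := AddCommGroup.modEq_iff_zsmul.1 hmod
  have hirr' : Irrational (α * ((X + 1 : ℕ) : ℝ)) := hirr.mul_natCast X.succ_ne_zero
  apply hirr'.ne_int (⌊α⌋ - z)
  rw [zsmul_one, Int.fract] at hz
  push_cast
  linear_combination hz

end FracPart

theorem prefix_determines_fracPart_locally_general {α : ℝ} (hirr : Irrational α) {a p q : ℕ → ℕ}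
    (ha : IsCFExpansion α a) (hpq : IsConvergents a p q) {f : ℕ → ℝ} (hf : IsFracPart α f)
    {X : ℕ} {d : ℕ → ℕ} (hd : IsDigitExpansion q X d) {J : Set ℝ} (hJ : J ∈ 𝓝 (f X)) :
    ∃ m : ℕ, (∀ n, m < n → d n = 0) ∧
      ∀ (Y : ℕ) (e : ℕ → ℕ), IsDigitExpansion q Y e → (∀ n, e n ≤ a (n + 1)) →
        (∀ n, n ≤ m → e n = d n) → f Y ∈ J := by
  rw [hf.eq_toIcoMod] at hJ
  obtain ⟨δ, hδ, hball⟩ := Metric.mem_nhds_iff.1 (continuousAt_toIcoMod_neg_fract hirr X hJ)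
  obtain ⟨m, ⟨hzero, hX⟩, htail⟩ := ((tendsto_add_atTop_nat 1).eventually
    (hd.eventually_eq_sum_range.and
      (hpq.eventually_abs_sum_mul_convergentError_lt ha hirr hδ))).exists
  refine ⟨m, hzero, fun Y e he hle hagree => ?_⟩
  obtain ⟨N, hY⟩ :=
    he.exists_eq_add_sum_Ico hX fun n hn => hagree n (Nat.lt_succ_iff.1 hn)
  have hmod : f Y = toIcoMod one_pos (-Int.fract α)
      (α * X + ∑ n ∈ Finset.Ico (m + 1) N, e n * convergentError α p q n) := by
    rw [hf.eq_toIcoMod, hY, Nat.cast_add, mul_add,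
      mul_sum_mul_eq_sum_mul_convergentError_add α p q, ← add_assoc,
      ← nsmul_one (∑ n ∈ _, e n * p n), toIcoMod_add_nsmul]
  rw [hmod]
  refine hball (Metric.mem_ball.2 ?_)
  rw [Real.dist_eq, add_sub_cancel_left]
  exact htail (fun n => e n) (fun n => by simpa only [Nat.abs_cast, Nat.cast_le] using hle n) N

/-- Given an open interval `J` around `f_α X`, there is an index `m` (with all
digits of `X` above `m` zero) such that every `Y` whose Ostrowski digits agree
with those of `X` up to index `m` satisfies `f_α Y ∈ J`. -/
theorem prefix_determines_fracPart_locally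
    (α : ℝ) (hα : 0 < α) (hirr : Irrational α)
    (a : ℕ → ℕ) (ha : IsCFExpansion α a)
    (p q : ℕ → ℕ) (hpq : IsConvergents a p q)
    (ost : ℕ → ℕ → ℕ) (host : ∀ X : ℕ, IsOstrowskiRep a q X (ost X))
    (fα : ℕ → ℝ) (hf : IsFracPart α fα)
    (X : ℕ) (lo hi : ℝ) (hJ : fα X ∈ Set.Ioo lo hi) :
    ∃ m : ℕ, (∀ n : ℕ, m < n → ost X n = 0) ∧
      ∀ Y : ℕ, (∀ n : ℕ, n ≤ m → ost Y n = ost X n) → fα Y ∈ Set.Ioo lo hi := by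
  obtain ⟨m, hzero, hm⟩ := prefix_determines_fracPart_locally_general hirr ha hpq hf
    (host X).isDigitExpansion (Ioo_mem_nhds hJ.1 hJ.2)
  exact ⟨m, hzero, fun Y => hm Y (ost Y) (host Y).isDigitExpansion (host Y).digit_le⟩
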